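/- Let Ω be the simple Toeplitz subshift defined by coding sequences (a_k) and (n_k), with eventual alphabet Ã = {a^(1),…,a^(r)} of cardinality at least 2, K̃ such that a_k ∈ Ã for all k ≥ K̃, and leading words ω^(1),…,ω^(r). Then for every L ≥ |block(K̃)| and every word u of length L occurring in some element of Ω, there exist j ∈ {1,…,r} and k ∈ {1,…,L} such that u = ω^(j)(−k)⋯ω^(j)(−k+L−1). -/

import Mathlib

open Filter Topology MeasureTheory

noncomputable section

abbrev SL2 := Matrix.SpecialLinearGroup (Fin 2) ℝ

/-- Operator norm of a 2×2 real matrix acting on Euclidean ℝ². -/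
def matNorm (M : Matrix (Fin 2) (Fin 2) ℝ) : ℝ :=
  ‖LinearMap.toContinuousLinearMap (Matrix.toEuclideanLin M)‖

/-- Norm of an element of SL(2,ℝ). -/
def slNorm (M : SL2) : ℝ := matNorm (M : Matrix (Fin 2) (Fin 2) ℝ)

/-- Action of an SL(2,ℝ) matrix on a euclidean vector. -/
def slAct (M : SL2) (v : EuclideanSpace ℝ (Fin 2)) : EuclideanSpace ℝ (Fin 2) :=
  Matrix.toEuclideanLin (M : Matrix (Fin 2) (Fin 2) ℝ) v

variable {𝒜 : Type*}

/-- The shift by `k` on two-sided sequences; `shift 1` is the left shift `T`. -/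
def shift (k : ℤ) (ω : ℤ → 𝒜) : ℤ → 𝒜 := fun n => ω (n + k)

/-- `Ω ⊆ 𝒜^ℤ` is a subshift: nonempty, closed, invariant under the shift and its inverse. -/
structure IsSubshift [TopologicalSpace 𝒜] (Ω : Set (ℤ → 𝒜)) : Prop where
  nonempty : Ω.Nonempty
  closed : IsClosed Ω
  shift_mem : ∀ ω ∈ Ω, shift 1 ω ∈ Ω
  shift_neg_mem : ∀ ω ∈ Ω, shift (-1) ω ∈ Ω

/-- The word `ω(k) ω(k+1) ⋯ ω(k+n-1)`. -/
def word (ω : ℤ → 𝒜) (k : ℤ) (n : ℕ) : List 𝒜 := (List.range n).map fun i => ω (k + i)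

/-- `v` occurs in `ω` at position `k`. -/
def occursAt (v : List 𝒜) (ω : ℤ → 𝒜) (k : ℤ) : Prop := v = word ω k v.length

/-- The words of length `n` occurring in elements of `Ω`. -/
def WordsN (Ω : Set (ℤ → 𝒜)) (n : ℕ) : Set (List 𝒜) :=
  {v | ∃ ω ∈ Ω, ∃ k : ℤ, v = word ω k n}

/-- The (nonempty) finite words occurring in elements of `Ω`. -/
def Words (Ω : Set (ℤ → 𝒜)) : Set (List 𝒜) :=
  {v | 1 ≤ v.length ∧ v ∈ WordsN Ω v.length}

/-- `A` is locally constant on `Ω`: its value depends only on a finite window around 0. -/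
def LocConstOn (Ω : Set (ℤ → 𝒜)) {β : Type*} (A : (ℤ → 𝒜) → β) : Prop :=
  ∃ N : ℕ, ∀ ω ∈ Ω, ∀ ρ ∈ Ω, (∀ i : ℤ, |i| ≤ (N : ℤ) → ω i = ρ i) → A ω = A ρ

/-- The positive part of the cocycle: `cocycleP A n ω = A(T^{n-1}ω) ⋯ A(ω)`. -/
def cocycleP (A : (ℤ → 𝒜) → SL2) : ℕ → (ℤ → 𝒜) → SL2
  | 0, _ => 1
  | n + 1, ω => A (shift n ω) * cocycleP A n ω

/-- The full cocycle over the shift, `n ∈ ℤ`. -/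
def cocycle (A : (ℤ → 𝒜) → SL2) (n : ℤ) (ω : ℤ → 𝒜) : SL2 :=
  if 0 ≤ n then cocycleP A n.toNat ω else (cocycleP A (-n).toNat (shift n ω))⁻¹

/-- `A` is uniform on `Ω`: `(1/n) log‖A(n,ω)‖` converges uniformly on `Ω`. -/
def IsUniform (Ω : Set (ℤ → 𝒜)) (A : (ℤ → 𝒜) → SL2) : Prop :=
  ∃ Λ : ℝ, TendstoUniformlyOn
    (fun (n : ℕ) (ω : ℤ → 𝒜) => Real.log (slNorm (cocycle A n ω)) / n)
    (fun _ => Λ) atTop Ω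

/-- The number of occurrences of `v` in `ω(1)⋯ω(n)`. -/
def occCount (v : List 𝒜) (ω : ℤ → 𝒜) (n : ℕ) : ℕ :=
  Set.ncard {k : ℤ | 1 ≤ k ∧ k + v.length ≤ (n : ℤ) + 1 ∧ occursAt v ω k}

/-- Uniform existence of word frequencies (unique ergodicity). -/
def UniformWordFreq (Ω : Set (ℤ → 𝒜)) : Prop :=
  ∀ v ∈ Words Ω, ∃ ν : ℝ, TendstoUniformlyOn
    (fun (n : ℕ) (ω : ℤ → 𝒜) => (occCount v ω n : ℝ) / n) (fun _ => ν) atTop Ω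

/-- Minimality: every orbit is dense in `Ω`. -/
def IsMinimalSubshift [TopologicalSpace 𝒜] (Ω : Set (ℤ → 𝒜)) : Prop :=
  ∀ ω ∈ Ω, ∀ ρ ∈ Ω, ρ ∈ closure {σ : ℤ → 𝒜 | ∃ k : ℤ, σ = shift k ω}

/-- Condition (α): for all large `n`, the words of length `n` of `Ω` are exactly the
words `lead j (-k+1) ⋯ lead j (-k+n)`, `0 ≤ k ≤ n`, of the leading words. -/
def CondAlpha (Ω : Set (ℤ → 𝒜)) {r : ℕ} (lead : Fin r → (ℤ → 𝒜)) : Prop :=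
  (∀ j, lead j ∈ Ω) ∧ ∃ N : ℕ, ∀ n : ℕ, N ≤ n →
    WordsN Ω n = {v | ∃ j : Fin r, ∃ k : ℕ, k ≤ n ∧ v = word (lead j) (1 - (k : ℤ)) n}

/-- Condition (β): for every locally constant cocycle the Lyapunov limits along the
leading words exist in both time directions and all have the same value. -/
def CondBeta (Ω : Set (ℤ → 𝒜)) {r : ℕ} (lead : Fin r → (ℤ → 𝒜)) : Prop :=
  ∀ A : (ℤ → 𝒜) → SL2, LocConstOn Ω A → ∃ Λ : ℝ, ∀ j : Fin r,
    Tendsto (fun n : ℕ => Real.log (slNorm (cocycle A n (lead j))) / n) atTop (𝓝 Λ) ∧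
    Tendsto (fun n : ℕ => Real.log (slNorm (cocycle A (-(n : ℤ)) (lead j))) / n) atTop (𝓝 Λ)

/-- Condition (γ): along the leading words, for every locally constant cocycle and every
nonzero vector, at most one of the two one-sided exponents is negative. -/
def CondGamma (Ω : Set (ℤ → 𝒜)) {r : ℕ} (lead : Fin r → (ℤ → 𝒜)) : Prop :=
  ∀ A : (ℤ → 𝒜) → SL2, LocConstOn Ω A → ∀ j : Fin r,
    ∀ v : EuclideanSpace ℝ (Fin 2), v ≠ 0 →
    ¬ (limsup (fun n : ℕ => Real.log ‖slAct (cocycle A n (lead j)) v‖ / n) atTop < 0 ∧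
       limsup (fun n : ℕ => Real.log ‖slAct (cocycle A (-(n : ℤ)) (lead j)) v‖ / n) atTop < 0)

/-- The leading sequence condition (LSC). -/
def SatisfiesLSC (Ω : Set (ℤ → 𝒜)) : Prop :=
  ∃ (r : ℕ) (lead : Fin r → (ℤ → 𝒜)), CondAlpha Ω lead ∧ CondBeta Ω lead ∧ CondGamma Ω lead

/-- `F` is subadditive on the words of `Ω`. -/
def SubadditiveOn (Ω : Set (ℤ → 𝒜)) (F : List 𝒜 → ℝ) : Prop :=
  ∀ x y : List 𝒜, x ∈ Words Ω → y ∈ Words Ω → (x ++ y) ∈ Words Ω → F (x ++ y) ≤ F x + F y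

/-- `Fb` is the asymptotic mean `lim_n max { F x / n : x ∈ W(Ω)_n }` of `F`. -/
def IsAsympMean (Ω : Set (ℤ → 𝒜)) (F : List 𝒜 → ℝ) (Fb : ℝ) : Prop :=
  Tendsto (fun n : ℕ => sSup ((fun x => F x / n) '' WordsN Ω n)) atTop (𝓝 Fb)

/-- Maximal number of pairwise disjoint occurrences of `v` in `ω(1)⋯ω(n)`. -/
def disjCount (v : List 𝒜) (ω : ℤ → 𝒜) (n : ℕ) : ℕ :=
  sSup {m : ℕ | ∃ S : Finset ℤ, S.card = m ∧
    (∀ k ∈ S, 1 ≤ k ∧ k + v.length ≤ (n : ℤ) + 1 ∧ occursAt v ω k) ∧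
    (∀ k ∈ S, ∀ l ∈ S, k ≠ l → (v.length : ℤ) ≤ |k - l|)}

/-- Condition (PQ) for the one-sided word `p(1)p(2)⋯`. -/
def CondPQ (p : ℤ → 𝒜) : Prop :=
  ∃ c : ℝ, 0 < c ∧ ∀ m : ℕ, 1 ≤ m →
    c ≤ liminf (fun n : ℕ => (m : ℝ) / n * disjCount (word p 1 m) p n) atTop

/-- ℓ²(ℤ) over the reals. -/
abbrev Ell2Z : Type := lp (fun _ : ℤ => ℝ) 2

/-- `H` acts as the Jacobi operator with coefficients `f, g` at `ω`. -/
def IsJacobiAt (f g : (ℤ → 𝒜) → ℝ) (ω : ℤ → 𝒜) (H : Ell2Z →L[ℝ] Ell2Z) : Prop :=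
  ∀ u : Ell2Z, ∀ n : ℤ,
    (H u : ∀ _ : ℤ, ℝ) n =
      f (shift n ω) * (u : ∀ _ : ℤ, ℝ) (n - 1) + f (shift (n + 1) ω) * (u : ∀ _ : ℤ, ℝ) (n + 1)
        + g (shift n ω) * (u : ∀ _ : ℤ, ℝ) n

/-- The pair `(f,g)` is periodic on `Ω`. -/
def PeriodicPair (Ω : Set (ℤ → 𝒜)) (f g : (ℤ → 𝒜) → ℝ) : Prop :=
  ∃ P : ℕ, 1 ≤ P ∧ ∀ ω ∈ Ω, f (shift (P : ℤ) ω) = f ω ∧ g (shift (P : ℤ) ω) = g ω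

/-- `S ⊆ ℝ` is a Cantor set of Lebesgue measure zero: compact, empty interior,
no isolated points, Lebesgue measure zero. -/
def IsMeasureZeroCantor (S : Set ℝ) : Prop :=
  IsCompact S ∧ interior S = ∅ ∧ Perfect S ∧ volume S = 0

/-- `n` copies of `x` separated by `n-1` copies of the letter `l`. -/
def sepJoin (x : List 𝒜) (l : 𝒜) (m : ℕ) : List 𝒜 :=
  (List.replicate (m - 1) (x ++ [l])).flatten ++ x

/-- `Blk a nseq (k+1)` is the block `block(k)` of the simple Toeplitz construction
(with `Blk a nseq 0 = block(-1) = ε`). -/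
def Blk (a : ℕ → 𝒜) (nseq : ℕ → ℕ) : ℕ → List 𝒜
  | 0 => []
  | k + 1 => sepJoin (Blk a nseq k) (a k) (nseq k)

/-- `p(1)p(2)⋯` is the one-sided word `block(∞)`: every block is a prefix of it. -/
def IsBlockInf (a : ℕ → 𝒜) (nseq : ℕ → ℕ) (p : ℤ → 𝒜) : Prop :=
  ∀ k : ℕ, word p 1 (Blk a nseq k).length = Blk a nseq k

/-- The simple Toeplitz subshift generated by `block(∞) = p(1)p(2)⋯`: all two-sided
sequences whose finite subwords all occur in `block(∞)`. -/
def toeplitzΩ (p : ℤ → 𝒜) : Set (ℤ → 𝒜) :=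
  {ω | ∀ (i : ℤ) (n : ℕ), ∃ l : ℤ, 1 ≤ l ∧ word ω i n = word p l n}

/-- The eventual alphabet: letters occurring infinitely often in `(a_k)`. -/
def EvAlph (a : ℕ → 𝒜) : Set 𝒜 := {x | ∀ K : ℕ, ∃ k, K ≤ k ∧ a k = x}

/-- The leading word `p^R v | p`: equals `p(n+1)` for `n ≥ 0`, carries the word `v` on
positions `-|v|, …, -1`, and equals `p(-(n+|v|))` for `n < -|v|`. -/
def leadWordGen (p : ℤ → 𝒜) (v : List 𝒜) : ℤ → 𝒜 := fun n =>
  if 0 ≤ n then p (n + 1)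
  else if -(v.length : ℤ) ≤ n then v.getD (n + v.length).toNat (p 1)
  else p (-(n + v.length))

/-- The Gauss map. -/
def gaussMap (x : ℝ) : ℝ := 1 / x - ⌊1 / x⌋

/-- `cfSeq α n` is the continued fraction coefficient `a_{n+1}` of `α`. -/
def cfSeq (α : ℝ) (n : ℕ) : ℕ := ⌊1 / (gaussMap^[n] α)⌋₊

/-- The standard Sturmian words: `sturmW α (n+1) = s_n`, `sturmW α 0 = s_{-1} = 1`,
`sturmW α 1 = s_0 = 0`, `s_1 = s_0^{a_1 - 1} s_{-1}`, `s_n = s_{n-1}^{a_n} s_{n-2}`. -/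
def sturmW (α : ℝ) : ℕ → List (Fin 2)
  | 0 => [1]
  | 1 => [0]
  | 2 => List.replicate (cfSeq α 0 - 1) (0 : Fin 2) ++ [1]
  | n + 3 => (List.replicate (cfSeq α (n + 1)) (sturmW α (n + 2))).flatten ++ sturmW α (n + 1)

/-- The Sturmian subshift with rotation number `α`: all two-sided sequences whose finite
subwords occur in some `s_n`. -/
def sturmΩ (α : ℝ) : Set (ℤ → Fin 2) :=
  {ω | ∀ (i : ℤ) (n : ℕ), ∃ m : ℕ, word ω i n <:+: sturmW α m}

/-- The positive cocycle of a map `A` over a transformation `T`: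
`cocycleH T A n ω = A(T^{n-1}ω) ⋯ A(ω)`. -/
def cocycleH {Ω : Type*} (T : Ω → Ω) (A : Ω → SL2) : ℕ → Ω → SL2
  | 0, _ => 1
  | n + 1, ω => A (T^[n] ω) * cocycleH T A n ω

end

/-!
Put `P k = |block(k-1)| + 1 = n_0 ⋯ n_{k-1}`. The letter of `block(∞)` at a position `i ≥ 1` is
`a_k`, where `k` is the unique index with `P k ∣ i` and `P (k+1) ∤ i`. Given a window of `block(∞)`,
take the largest `v` such that `P v` divides some position `s` of the window, and compare a position
`t ≠ s` of the window with `t - s`. For `k ≤ v` we have `P k ∣ t ↔ P k ∣ t - s`, because `P k ∣ s`.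
Moreover `P (v+1)` divides neither `t` nor `t - s`: if it divided `t - s`, then some multiple of it
would lie between `s` and `t`. Hence `t` carries the same letter as `|t - s|`, while `s` carries
`a_v`: the window, recentred at `s`, is a window of the leading word with central letter `a_v`.
-/

section

open Finset (range)

variable {𝒜 : Type*} {a : ℕ → 𝒜} {nseq : ℕ → ℕ} {p : ℤ → 𝒜}

/-- The period `n_0 ⋯ n_{k-1} = |block(k-1)| + 1` after which `block(k-1)` is repeated, up to the
letter that follows it. -/
def blockPeriod (nseq : ℕ → ℕ) (k : ℕ) : ℕ := ∏ i ∈ range k, nseq i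

/-- The position `i` is filled at stage `k` of the Toeplitz construction: for `i ≥ 1` this means
that the letter of `block(∞)` at `i` comes from `a_k`. Negative positions are allowed because a
window of a leading word reaches to both sides of its central letter. -/
def FilledAt (nseq : ℕ → ℕ) (k : ℕ) (i : ℤ) : Prop :=
  (blockPeriod nseq k : ℤ) ∣ i ∧ ¬ (blockPeriod nseq (k + 1) : ℤ) ∣ i

lemma blockPeriod_succ (nseq : ℕ → ℕ) (k : ℕ) :
    blockPeriod nseq (k + 1) = nseq k * blockPeriod nseq k := by
  rw [blockPeriod, Finset.prod_range_succ, mul_comm, blockPeriod]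

lemma blockPeriod_dvd (nseq : ℕ → ℕ) {j k : ℕ} (h : j ≤ k) :
    blockPeriod nseq j ∣ blockPeriod nseq k :=
  Finset.prod_dvd_prod_of_subset _ _ _ (Finset.range_subset_range.2 h)

lemma natCast_blockPeriod_dvd (nseq : ℕ → ℕ) {j k : ℕ} (h : j ≤ k) :
    (blockPeriod nseq j : ℤ) ∣ blockPeriod nseq k :=
  Int.natCast_dvd_natCast.2 (blockPeriod_dvd nseq h)

lemma blockPeriod_pos (hn : ∀ k, 0 < nseq k) (k : ℕ) : 0 < blockPeriod nseq k :=
  Finset.prod_pos fun i _ => hn i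

lemma lt_blockPeriod (hn : ∀ k, 2 ≤ nseq k) (k : ℕ) : k < blockPeriod nseq k :=
  calc k < 2 ^ k := Nat.lt_two_pow_self
    _ ≤ blockPeriod nseq k := by
      simpa [blockPeriod] using Finset.pow_card_le_prod (range k) nseq 2 fun i _ => hn i

lemma not_blockPeriod_dvd_of_abs_le (hn : ∀ k, 2 ≤ nseq k) {k : ℕ} {i : ℤ} (hi : i ≠ 0)
    (hik : |i| ≤ k) : ¬ (blockPeriod nseq k : ℤ) ∣ i := fun h => by
  have hle : (blockPeriod nseq k : ℤ) ≤ |i| := Int.le_of_dvd (abs_pos.2 hi) ((dvd_abs _ _).2 h)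
  have hlt := lt_blockPeriod hn k
  omega

lemma exists_filledAt (hn : ∀ k, 2 ≤ nseq k) {i : ℤ} (hi : i ≠ 0) : ∃ k, FilledAt nseq k i := by
  obtain ⟨k, hk, hk'⟩ := Nat.exists_not_and_succ_of_not_zero_of_exists
    (p := fun k => ¬ (blockPeriod nseq k : ℤ) ∣ i) (by simp [blockPeriod])
    ⟨i.natAbs, not_blockPeriod_dvd_of_abs_le hn hi (Int.abs_eq_natAbs i).le⟩
  exact ⟨k, not_not.1 hk, hk'⟩

lemma FilledAt.abs {k : ℕ} {i : ℤ} (h : FilledAt nseq k i) : FilledAt nseq k |i| := by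
  simpa only [FilledAt, dvd_abs] using h

lemma exists_dvd_mem_Ico {m : ℤ} (hm : 0 < m) (x : ℤ) : ∃ z ∈ Set.Ico x (x + m), m ∣ z := by
  obtain ⟨c, hc, -⟩ := existsUnique_add_zsmul_mem_Ico hm 0 x
  exact ⟨_, hc, by simp⟩

lemma exists_dvd_mem_uIcc {m s t : ℤ} (hst : s ≠ t) (h : m ∣ t - s) :
    ∃ z ∈ Set.uIcc s t, m ∣ z := by
  have hm : 0 < |m| := abs_pos.2 fun hm => hst (by simpa [hm, sub_eq_zero, eq_comm] using h)
  have hle : |m| ≤ |t - s| :=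
    Int.le_of_dvd (abs_pos.2 (sub_ne_zero.2 hst.symm)) ((abs_dvd_abs m (t - s)).2 h)
  obtain ⟨z, hz, hmz⟩ := exists_dvd_mem_Ico hm (min s t)
  refine ⟨z, Set.mem_Icc.2 ⟨hz.1, ?_⟩, (abs_dvd m z).1 hmz⟩
  have := hz.2
  rw [← max_sub_min_eq_abs] at hle
  omega

lemma FilledAt.sub_of_not_dvd_uIcc {k v : ℕ} {s t : ℤ} (ht : FilledAt nseq k t) (hst : s ≠ t)
    (hs : (blockPeriod nseq v : ℤ) ∣ s)
    (hgap : ∀ z ∈ Set.uIcc s t, ¬ (blockPeriod nseq (v + 1) : ℤ) ∣ z) :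
    FilledAt nseq k (t - s) := by
  have hkv : k ≤ v := by
    by_contra! h
    exact hgap t Set.right_mem_uIcc ((natCast_blockPeriod_dvd nseq h).trans ht.1)
  refine ⟨dvd_sub ht.1 ((natCast_blockPeriod_dvd nseq hkv).trans hs), fun hdvd => ?_⟩
  obtain hlt | rfl := hkv.lt_or_eq
  · exact ht.2 ((dvd_sub_left ((natCast_blockPeriod_dvd nseq hlt).trans hs)).1 hdvd)
  · obtain ⟨z, hz, hdvd_z⟩ := exists_dvd_mem_uIcc hst hdvd
    exact hgap z hz hdvd_z

lemma exists_maximal_blockPeriod_dvd (hn : ∀ k, 2 ≤ nseq k) {K : ℕ} {l m : ℤ} (hl : 0 < l)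
    (hlm : l + blockPeriod nseq K ≤ m) :
    ∃ v, K ≤ v ∧ ∃ s ∈ Set.Ico l m, (blockPeriod nseq v : ℤ) ∣ s ∧
      ∀ z ∈ Set.Ico l m, ¬ (blockPeriod nseq (v + 1) : ℤ) ∣ z := by
  have hpos : 0 < (blockPeriod nseq K : ℤ) :=
    Int.natCast_pos.2 (blockPeriod_pos (fun k => two_pos.trans_le (hn k)) K)
  obtain ⟨s, hs, hdvd⟩ := exists_dvd_mem_Ico hpos l
  obtain ⟨i, hi, hi'⟩ := Nat.exists_not_and_succ_of_not_zero_of_exists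
    (p := fun i => ∀ z ∈ Set.Ico l m, ¬ (blockPeriod nseq (K + i) : ℤ) ∣ z)
    (fun h => h s ⟨hs.1, hs.2.trans_le hlm⟩ hdvd)
    ⟨m.toNat, fun z hz => by
      obtain ⟨hlz, hzm⟩ := hz
      exact not_blockPeriod_dvd_of_abs_le hn (by omega) (by rw [abs_of_pos (by omega)]; omega)⟩
  push Not at hi
  obtain ⟨s, hs, hdvd⟩ := hi
  exact ⟨K + i, Nat.le_add_right K i, s, hs, hdvd, hi'⟩

lemma getElem?_flatten_replicate (w : List 𝒜) {m j : ℕ} (hj : j < m * w.length) :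
    (List.replicate m w).flatten[j]? = w[j % w.length]? := by
  induction m generalizing j with
  | zero => simp at hj
  | succ m ih =>
    rw [List.replicate_succ, List.flatten_cons]
    rcases lt_or_ge j w.length with h | h
    · rw [List.getElem?_append_left h, Nat.mod_eq_of_lt h]
    · rw [Nat.succ_mul] at hj
      rw [List.getElem?_append_right h, ih (by omega), ← Nat.mod_eq_sub_mod h]

lemma sepJoin_append_singleton (x : List 𝒜) (c : 𝒜) {m : ℕ} (hm : 0 < m) :
    sepJoin x c m ++ [c] = (List.replicate m (x ++ [c])).flatten := by
  obtain ⟨m, rfl⟩ := Nat.exists_eq_add_one.2 hm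
  simp [sepJoin, List.replicate_succ']

lemma length_Blk_add_one (a : ℕ → 𝒜) (hn : ∀ k, 0 < nseq k) (k : ℕ) :
    (Blk a nseq k).length + 1 = blockPeriod nseq k := by
  induction k with
  | zero => simp [Blk, blockPeriod]
  | succ k ih =>
    have h := congrArg List.length (sepJoin_append_singleton (Blk a nseq k) (a k) (hn k))
    simpa [Blk, blockPeriod_succ, ih] using h

lemma length_Blk_lt_succ (a : ℕ → 𝒜) (hn : ∀ k, 2 ≤ nseq k) (k : ℕ) :
    (Blk a nseq k).length < (Blk a nseq (k + 1)).length := by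
  have hn_pos : ∀ k, 0 < nseq k := fun k => two_pos.trans_le (hn k)
  apply Nat.lt_of_add_lt_add_right (n := 1)
  rw [length_Blk_add_one a hn_pos, length_Blk_add_one a hn_pos, blockPeriod_succ]
  exact lt_mul_of_one_lt_left (blockPeriod_pos hn_pos k) (hn k)

lemma mod_blockPeriod_eq_length_Blk_iff (a : ℕ → 𝒜) (hn : ∀ k, 0 < nseq k) {k j : ℕ} :
    j % blockPeriod nseq k = (Blk a nseq k).length ↔ blockPeriod nseq k ∣ j + 1 := by
  rw [← length_Blk_add_one a hn, Nat.dvd_iff_mod_eq_zero, Nat.succ_mod_succ_eq_zero_iff]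

lemma mod_blockPeriod_lt_length_Blk (a : ℕ → 𝒜) (hn : ∀ k, 0 < nseq k) {k j : ℕ}
    (h : ¬ blockPeriod nseq k ∣ j + 1) : j % blockPeriod nseq k < (Blk a nseq k).length := by
  have hlt := Nat.mod_lt j (blockPeriod_pos hn k)
  have hne := mt (mod_blockPeriod_eq_length_Blk_iff a hn).1 h
  have hlen := length_Blk_add_one a hn k
  omega

lemma getElem?_Blk_succ (hn : ∀ k, 0 < nseq k) {k j : ℕ}
    (hj : j < (Blk a nseq (k + 1)).length) :
    (Blk a nseq (k + 1))[j]? = (Blk a nseq k ++ [a k])[j % blockPeriod nseq k]? := by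
  have hlen : (Blk a nseq k ++ [a k]).length = blockPeriod nseq k := by
    rw [List.length_append, List.length_singleton, length_Blk_add_one a hn]
  have hj' : j < nseq k * (Blk a nseq k ++ [a k]).length := by
    rw [hlen, ← blockPeriod_succ, ← length_Blk_add_one a hn]
    omega
  rw [← List.getElem?_append_left hj (l₂ := [a k]), Blk, sepJoin_append_singleton _ _ (hn k),
    getElem?_flatten_replicate _ hj', hlen]

lemma getElem?_Blk_of_not_dvd (hn : ∀ k, 0 < nseq k) {k N j : ℕ} (hkN : k ≤ N)
    (hj : j < (Blk a nseq N).length) (hdvd : ¬ blockPeriod nseq k ∣ j + 1) :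
    (Blk a nseq N)[j]? = (Blk a nseq k)[j % blockPeriod nseq k]? := by
  induction N, hkN using Nat.le_induction generalizing j with
  | base => rw [Nat.mod_eq_of_lt (by rw [← length_Blk_add_one a hn]; omega)]
  | succ N hkN ih =>
    have hkN_dvd := blockPeriod_dvd nseq hkN
    have hmod := mod_blockPeriod_lt_length_Blk a hn fun h => hdvd (hkN_dvd.trans h)
    have hdvd_mod : ¬ blockPeriod nseq k ∣ j % blockPeriod nseq N + 1 := by
      rwa [← mod_blockPeriod_eq_length_Blk_iff a hn, Nat.mod_mod_of_dvd j hkN_dvd,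
        mod_blockPeriod_eq_length_Blk_iff a hn]
    rw [getElem?_Blk_succ hn hj, List.getElem?_append_left hmod, ih hmod hdvd_mod,
      Nat.mod_mod_of_dvd j hkN_dvd]

lemma getElem?_Blk_of_filledAt (hn : ∀ k, 0 < nseq k) {k N j : ℕ}
    (hj : j < (Blk a nseq N).length) (hfill : FilledAt nseq k (j + 1 : ℕ)) :
    (Blk a nseq N)[j]? = some (a k) := by
  have hdvd : blockPeriod nseq k ∣ j + 1 := Int.natCast_dvd_natCast.1 hfill.1
  have hndvd : ¬ blockPeriod nseq (k + 1) ∣ j + 1 := fun h => hfill.2 (Int.natCast_dvd_natCast.2 h)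
  have hkN : k < N := by
    by_contra! h
    have hle := Nat.le_of_dvd j.succ_pos ((blockPeriod_dvd nseq h).trans hdvd)
    rw [← length_Blk_add_one a hn] at hle
    omega
  rw [getElem?_Blk_of_not_dvd hn hkN hj hndvd,
    getElem?_Blk_succ hn (mod_blockPeriod_lt_length_Blk a hn hndvd),
    Nat.mod_mod_of_dvd j (blockPeriod_dvd nseq k.le_succ),
    (mod_blockPeriod_eq_length_Blk_iff a hn).2 hdvd, List.getElem?_concat_length]

/-- In `word` the coercion `ℕ → ℤ` is elaborated on the list `List.range n`, not on its entries. -/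
lemma word_eq_map_range (ω : ℤ → 𝒜) (k : ℤ) (n : ℕ) :
    word ω k n = (List.range n).map fun i : ℕ => ω (k + (i : ℤ)) := by
  simp [word, List.map_eq_flatMap, List.flatMap_assoc]

lemma getElem?_word (ω : ℤ → 𝒜) (k : ℤ) {n i : ℕ} (hi : i < n) :
    (word ω k n)[i]? = some (ω (k + i)) := by
  simp [word_eq_map_range, hi]

lemma word_congr {ω ρ : ℤ → 𝒜} {k l : ℤ} {n : ℕ}
    (h : ∀ i : ℕ, i < n → ω (k + i) = ρ (l + i)) : word ω k n = word ρ l n := by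
  simpa [word_eq_map_range] using h

lemma IsBlockInf.apply_of_filledAt (hp : IsBlockInf a nseq p) (hn : ∀ k, 2 ≤ nseq k) {k : ℕ}
    {i : ℤ} (hi : 0 < i) (h : FilledAt nseq k i) : p i = a k := by
  obtain ⟨j, rfl⟩ : ∃ j : ℕ, i = (j + 1 : ℕ) := ⟨(i - 1).toNat, by omega⟩
  have hn_pos : ∀ k, 0 < nseq k := fun k => two_pos.trans_le (hn k)
  have hj : j < (Blk a nseq (j + 1)).length := by
    have hlt := lt_blockPeriod hn (j + 1)
    rw [← length_Blk_add_one a hn_pos] at hlt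
    omega
  have hblk := getElem?_Blk_of_filledAt hn_pos hj h
  rw [← hp (j + 1), getElem?_word p 1 hj, Option.some_inj] at hblk
  rwa [Nat.cast_succ, add_comm]

lemma leadWordGen_singleton_sub_one (p : ℤ → 𝒜) (c : 𝒜) (d : ℤ) :
    leadWordGen p [c] (d - 1) = if d = 0 then c else p |d| := by
  simp only [leadWordGen, List.length_singleton, Nat.cast_one]
  rcases lt_trichotomy d 0 with h | rfl | h
  · rw [if_neg (by omega), if_neg (by omega), if_neg h.ne, abs_of_neg h, sub_add_cancel]
  · simp
  · rw [if_pos (by omega), if_neg h.ne', abs_of_pos h, sub_add_cancel]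

lemma IsBlockInf.apply_eq_leadWordGen (hp : IsBlockInf a nseq p) (hn : ∀ k, 2 ≤ nseq k) {v : ℕ}
    {s t : ℤ} (ht : 0 < t) (hs : (blockPeriod nseq v : ℤ) ∣ s)
    (hgap : ∀ z ∈ Set.uIcc s t, ¬ (blockPeriod nseq (v + 1) : ℤ) ∣ z) :
    p t = leadWordGen p [a v] (t - s - 1) := by
  rw [leadWordGen_singleton_sub_one]
  split_ifs with hts
  · obtain rfl := sub_eq_zero.1 hts
    exact hp.apply_of_filledAt hn ht ⟨hs, hgap t Set.left_mem_uIcc⟩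
  · obtain ⟨k, hk⟩ := exists_filledAt hn ht.ne'
    have hk_sub : FilledAt nseq k |t - s| :=
      (hk.sub_of_not_dvd_uIcc (fun h => hts (by simp [h])) hs hgap).abs
    rw [hp.apply_of_filledAt hn ht hk, hp.apply_of_filledAt hn (abs_pos.2 hts) hk_sub]

end

theorem statement12_general {𝒜 : Type*} (a : ℕ → 𝒜) (nseq : ℕ → ℕ) (hn : ∀ k, 2 ≤ nseq k)
    (p : ℤ → 𝒜) (hp : IsBlockInf a nseq p) (K L : ℕ) (hL : (Blk a nseq K).length < L) :
    ∀ u ∈ WordsN (toeplitzΩ p) L, ∃ v, K ≤ v ∧ ∃ k : ℕ, 1 ≤ k ∧ k ≤ L ∧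
      u = word (leadWordGen p [a v]) (-(k : ℤ)) L := by
  rintro u ⟨ω, hω, i, rfl⟩
  obtain ⟨l, hl, hword⟩ := hω i L
  have hperiod : blockPeriod nseq K ≤ L := by
    rwa [← length_Blk_add_one a fun k => two_pos.trans_le (hn k)]
  obtain ⟨v, hKv, s, ⟨hls, hsL⟩, hs, hgap⟩ :=
    exists_maximal_blockPeriod_dvd hn (K := K) (m := l + L) hl (by omega)
  refine ⟨v, hKv, (s - l + 1).toNat, by omega, by omega, hword.trans (word_congr fun q hq => ?_)⟩
  have hwindow : Set.uIcc s (l + q) ⊆ Set.Ico l (l + L) :=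
    Set.ordConnected_Ico.uIcc_subset ⟨hls, hsL⟩ ⟨by omega, by omega⟩
  rw [hp.apply_eq_leadWordGen hn (by omega) hs fun z hz => hgap z (hwindow hz)]
  congr 1
  omega

/-- **Occurrence of words around the origin.** In a simple Toeplitz
subshift with eventual alphabet `{a^(1),…,a^(r)}` (of cardinality ≥ 2), every word of
length `L ≥ |block(K̃)|` occurs in some leading word `ω^(j)` at a position `-k`,
`1 ≤ k ≤ L`. -/
theorem statement12 {𝒜 : Type*} [Fintype 𝒜]
    (a : ℕ → 𝒜) (nseq : ℕ → ℕ) (ha : ∀ k, a (k + 1) ≠ a k) (hn : ∀ k, 2 ≤ nseq k)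
    (p : ℤ → 𝒜) (hp : IsBlockInf a nseq p)
    {r : ℕ} (aj : Fin r → 𝒜) (haj : ∀ x : 𝒜, x ∈ EvAlph a ↔ ∃ j, aj j = x)
    (hcard : ∃ x y : 𝒜, x ∈ EvAlph a ∧ y ∈ EvAlph a ∧ x ≠ y)
    (K : ℕ) (hK : ∀ k, K ≤ k → a k ∈ EvAlph a) :
    ∀ L : ℕ, (Blk a nseq (K + 1)).length ≤ L →
      ∀ u ∈ WordsN (toeplitzΩ p) L, ∃ j : Fin r, ∃ k : ℕ, 1 ≤ k ∧ k ≤ L ∧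
        u = word (leadWordGen p [aj j]) (-(k : ℤ)) L := by
  intro L hL u hu
  obtain ⟨v, hKv, k, hk⟩ :=
    statement12_general a nseq hn p hp K L ((length_Blk_lt_succ a hn K).trans_le hL) u hu
  obtain ⟨j, hj⟩ := (haj (a v)).1 (hK v hKv)
  exact ⟨j, k, hj ▸ hk⟩
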